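/- For every real x with 0 < x < 1/2, the function M(x) = −4 + 24x + 12·(1−x)·ln(1−x) − 2·(1−x)·ln²(1−x) − (1/2)·ln⁴(1−x) − 12x·ln(x) − 4·(1−2x)·ln(1−x)·ln(x) − 2x·ln²(1−x)·ln(x) + 2·ln³(1−x)·ln(x) + (2 − ln²(1−x))·ln²(x) − (1−x)·(2 − 2·ln(1−x) + ln²(1−x))·ln²(x) + (4 − 4·ln(1−x) + 2·ln²(1−x))·Li₂(1−x) − (4 − 4·ln(x) + 2·ln²(x))·Li₂(x) − (2·ln²(1−x) − 4·ln(1−x)·ln(x) + 2·ln²(x))·Li₂(x/(x−1)) − 4·(1 − ln(x))·Li₃(x) + 4·(1 − ln(1−x))·Li₃(1−x) + 4·(ln(x) − ln(1−x))·Li₃(x/(x−1)) + 4·Li₄(1−x) − 4·Li₄(x) − 4·Li₄(x/(x−1)) has derivative M′(x) = ln²(x)·ln²(1−x). -/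

import Mathlib

open Real

/-- The polylogarithm `Li s x = ∑_{k=1}^∞ x^k / k^s` for real `x` with `|x| < 1`. -/
noncomputable def Li (s : ℕ) (x : ℝ) : ℝ := ∑' k : ℕ, x ^ (k + 1) / ((k : ℝ) + 1) ^ s

/-- `ζ(3) = ∑_{k=1}^∞ 1/k³`. -/
noncomputable def zeta3 : ℝ := ∑' k : ℕ, 1 / ((k : ℝ) + 1) ^ 3

/-- Lowering the order of the polylogarithm by differentiation. -/
theorem hasDerivAt_Li (s : ℕ) {x : ℝ} (hx : |x| < 1) (hx0 : x ≠ 0) :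
    HasDerivAt (Li (s + 1)) (Li s x / x) x := by
  obtain ⟨r, hxr, hr⟩ := exists_between hx
  have hr0 : 0 < r := (abs_nonneg x).trans_lt hxr
  have hterm : ∀ (n : ℕ) (y : ℝ), y ∈ Metric.ball (0 : ℝ) r →
      HasDerivAt (fun z : ℝ => z ^ (n + 1) / ((n : ℝ) + 1) ^ (s + 1))
        (y ^ n / ((n : ℝ) + 1) ^ s) y := by
    intro n y _
    have hn : (n : ℝ) + 1 ≠ 0 := by positivity
    refine ((hasDerivAt_pow (n + 1) y).div_const (((n : ℝ) + 1) ^ (s + 1))).congr_deriv ?_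
    push_cast [Nat.add_sub_cancel]
    field_simp
    ring
  have hbound : ∀ (n : ℕ) (y : ℝ), y ∈ Metric.ball (0 : ℝ) r →
      ‖y ^ n / ((n : ℝ) + 1) ^ s‖ ≤ r ^ n := by
    intro n y hy
    rw [mem_ball_zero_iff] at hy
    have hn : (1 : ℝ) ≤ ((n : ℝ) + 1) ^ s := one_le_pow₀ (by simp)
    rw [norm_div, norm_pow, Real.norm_of_nonneg (zero_le_one.trans hn)]
    exact (div_le_self (by positivity) hn).trans (by gcongr)
  have hderiv := hasDerivAt_tsum_of_isPreconnected (y₀ := 0) (y := x)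
    (summable_geometric_of_lt_one hr0.le hr) Metric.isOpen_ball
    (convex_ball (0 : ℝ) r).isPreconnected hterm hbound (Metric.mem_ball_self hr0)
    (by simp) (by simpa using hxr)
  refine hderiv.congr_deriv ?_
  rw [Li, ← tsum_div_const]
  congr 1 with n
  field_simp
  ring

theorem Li_one {x : ℝ} (hx : |x| < 1) : Li 1 x = -log (1 - x) := by
  simpa [Li] using (hasSum_pow_div_log_of_abs_lt_one hx).tsum_eq

theorem hasDerivAt_div_sub_one {x : ℝ} (hx : x ≠ 1) :
    HasDerivAt (fun y : ℝ => y / (y - 1)) (-1 / (1 - x) ^ 2) x := by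
  have h : x - 1 ≠ 0 := sub_ne_zero.mpr hx
  refine ((hasDerivAt_id x).div ((hasDerivAt_id x).sub_const 1) h).congr_deriv ?_
  simp only [id]
  rw [show (1 - x) ^ 2 = (x - 1) ^ 2 by ring]
  ring

theorem hasDerivAt_Li_one_sub (s : ℕ) {x : ℝ} (h0 : 0 < x) (h1 : x < 1) :
    HasDerivAt (fun y : ℝ => Li (s + 1) (1 - y)) (-(Li s (1 - x) / (1 - x))) x := by
  have h := hasDerivAt_Li s (x := 1 - x) (by rw [abs_lt]; constructor <;> linarith) (by linarith)
  exact (h.comp x ((hasDerivAt_id x).const_sub 1)).congr_deriv (by ring)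

theorem abs_div_sub_one_lt_one {x : ℝ} (h0 : 0 < x) (h1 : x < 1 / 2) : |x / (x - 1)| < 1 := by
  rw [abs_div, abs_of_pos h0, abs_of_neg (by linarith), div_lt_one (by linarith)]
  linarith

theorem hasDerivAt_Li_div_sub_one (s : ℕ) {x : ℝ} (h0 : 0 < x) (h1 : x < 1 / 2) :
    HasDerivAt (fun y : ℝ => Li (s + 1) (y / (y - 1))) (Li s (x / (x - 1)) / (x * (1 - x))) x := by
  have hx : x - 1 ≠ 0 := by linarith
  have hx' : 1 - x ≠ 0 := by linarith
  have h := (hasDerivAt_Li s (abs_div_sub_one_lt_one h0 h1) (div_ne_zero h0.ne' hx)).comp x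
    (hasDerivAt_div_sub_one (by linarith))
  refine h.congr_deriv ?_
  rw [show x - 1 = -(1 - x) by ring]
  field_simp

theorem Li_one_div_sub_one {x : ℝ} (h0 : 0 < x) (h1 : x < 1 / 2) :
    Li 1 (x / (x - 1)) = log (1 - x) := by
  have hx' : 1 - x ≠ 0 := by linarith
  rw [Li_one (abs_div_sub_one_lt_one h0 h1),
    show 1 - x / (x - 1) = (1 - x)⁻¹ by
      rw [show x - 1 = -(1 - x) by ring]
      field_simp
      ring,
    log_inv, neg_neg]

theorem stmt_11 (x : ℝ) (h1 : 0 < x) (h2 : x < 1 / 2) :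
    HasDerivAt (fun x : ℝ =>
      -4 + 24 * x + 12 * (1 - x) * Real.log (1 - x)
        - 2 * (1 - x) * Real.log (1 - x) ^ 2
        - (1 / 2) * Real.log (1 - x) ^ 4
        - 12 * x * Real.log x
        - 4 * (1 - 2 * x) * Real.log (1 - x) * Real.log x
        - 2 * x * Real.log (1 - x) ^ 2 * Real.log x
        + 2 * Real.log (1 - x) ^ 3 * Real.log x
        + (2 - Real.log (1 - x) ^ 2) * Real.log x ^ 2
        - (1 - x) * (2 - 2 * Real.log (1 - x) + Real.log (1 - x) ^ 2) * Real.log x ^ 2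
        + (4 - 4 * Real.log (1 - x) + 2 * Real.log (1 - x) ^ 2) * Li 2 (1 - x)
        - (4 - 4 * Real.log x + 2 * Real.log x ^ 2) * Li 2 x
        - (2 * Real.log (1 - x) ^ 2 - 4 * Real.log (1 - x) * Real.log x
            + 2 * Real.log x ^ 2) * Li 2 (x / (x - 1))
        - 4 * (1 - Real.log x) * Li 3 x
        + 4 * (1 - Real.log (1 - x)) * Li 3 (1 - x)
        + 4 * (Real.log x - Real.log (1 - x)) * Li 3 (x / (x - 1))
        + 4 * Li 4 (1 - x) - 4 * Li 4 x - 4 * Li 4 (x / (x - 1)))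
      (Real.log x ^ 2 * Real.log (1 - x) ^ 2) x := by
  have hx0 : x ≠ 0 := h1.ne'
  have hx1 : 1 - x ≠ 0 := by linarith
  have hlt : x < 1 := by linarith
  have habs : |x| < 1 := by rwa [abs_of_pos h1]
  have dX : HasDerivAt (fun y : ℝ => y) 1 x := hasDerivAt_id x
  have dY : HasDerivAt (fun y : ℝ => 1 - y) (-1) x := dX.const_sub 1
  have dL : HasDerivAt (fun y : ℝ => Real.log y) x⁻¹ x := Real.hasDerivAt_log hx0
  have dM : HasDerivAt (fun y : ℝ => Real.log (1 - y)) (-1 / (1 - x)) x := dY.log hx1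
  have dA2 := hasDerivAt_Li 1 habs hx0
  have dA3 := hasDerivAt_Li 2 habs hx0
  have dA4 := hasDerivAt_Li 3 habs hx0
  have dB2 := hasDerivAt_Li_one_sub 1 h1 hlt
  have dB3 := hasDerivAt_Li_one_sub 2 h1 hlt
  have dB4 := hasDerivAt_Li_one_sub 3 h1 hlt
  have dC2 := hasDerivAt_Li_div_sub_one 1 h1 h2
  have dC3 := hasDerivAt_Li_div_sub_one 2 h1 h2
  have dC4 := hasDerivAt_Li_div_sub_one 3 h1 h2
  rw [Li_one habs] at dA2
  rw [Li_one (by rw [abs_lt]; constructor <;> linarith), sub_sub_cancel] at dB2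
  rw [Li_one_div_sub_one h1 h2] at dC2
  norm_num only at dA2 dA3 dA4 dB2 dB3 dB4 dC2 dC3 dC4
  have key := (dX.const_mul 24).const_add (-4)
    |>.add ((dY.const_mul 12).mul dM)
    |>.sub ((dY.const_mul 2).mul (dM.pow 2))
    |>.sub ((dM.pow 4).const_mul (1 / 2))
    |>.sub ((dX.const_mul 12).mul dL)
    |>.sub (((((dX.const_mul 2).const_sub 1).const_mul 4).mul dM).mul dL)
    |>.sub (((dX.const_mul 2).mul (dM.pow 2)).mul dL)
    |>.add (((dM.pow 3).const_mul 2).mul dL)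
    |>.add (((dM.pow 2).const_sub 2).mul (dL.pow 2))
    |>.sub ((dY.mul (((dM.const_mul 2).const_sub 2).add (dM.pow 2))).mul (dL.pow 2))
    |>.add ((((dM.const_mul 4).const_sub 4).add ((dM.pow 2).const_mul 2)).mul dB2)
    |>.sub ((((dL.const_mul 4).const_sub 4).add ((dL.pow 2).const_mul 2)).mul dA2)
    |>.sub (((((dM.pow 2).const_mul 2).sub ((dM.const_mul 4).mul dL)).add
      ((dL.pow 2).const_mul 2)).mul dC2)
    |>.sub (((dL.const_sub 1).const_mul 4).mul dA3)
    |>.add (((dM.const_sub 1).const_mul 4).mul dB3)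
    |>.add (((dL.sub dM).const_mul 4).mul dC3)
    |>.add (dB4.const_mul 4)
    |>.sub (dA4.const_mul 4)
    |>.sub (dC4.const_mul 4)
  refine key.congr_deriv ?_
  simp only [Pi.pow_apply, Pi.add_apply, Pi.sub_apply, Pi.mul_apply]
  field_simp
  ring
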